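/- arXiv:0902.4486 — 3 statements merged into one kernel-verified Lean document; each statement's English description precedes it below -/
import Mathlib

section
/- Let n ≥ 2 be an integer and let Φ be a real symmetric n×n matrix with trace(Φ) = 0. Then |trace(Φ³)| ≤ ((n−2)/√(n(n−1)))·(trace(Φ²))^{3/2}. -/
/-!
A Hermitian matrix has real eigenvalues `xᵢ`, and the trace of its `k`-th power is `∑ xᵢ ^ k`, so
the theorem is an inequality for `N` reals with sum zero. Write `∑ xᵢ ^ 2 = N (N - 1) d ^ 2` with
`d ≥ 0`. By Cauchy–Schwarz every `xᵢ` is at most `(N - 1) d`, hence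
`0 ≤ ∑ ((N - 1) d - xᵢ) (xᵢ + d) ^ 2`, and expanding this sum gives the upper bound. Every term
vanishes in the extremal configuration, where one `xᵢ` is `(N - 1) d` and all the others are `-d`.
The lower bound is the upper bound for `-x`.
-/

open Finset

section OrderedRing

variable {ι R : Type*} [CommRing R] [LinearOrder R] [IsStrictOrderedRing R]
  {s : Finset ι} {x : ι → R}

lemma card_mul_sq_le_of_sum_eq_zero (hsum : ∑ i ∈ s, x i = 0) {i : ι} (hi : i ∈ s) :
    (#s : R) * x i ^ 2 ≤ (#s - 1) * ∑ j ∈ s, x j ^ 2 := by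
  classical
  have hrest : ∑ j ∈ s.erase i, x j = -x i := by
    linear_combination s.add_sum_erase x hi + hsum
  have hrest_sq : ∑ j ∈ s.erase i, x j ^ 2 = ∑ j ∈ s, x j ^ 2 - x i ^ 2 := by
    linear_combination s.add_sum_erase (fun j ↦ x j ^ 2) hi
  have hcauchy := sq_sum_le_card_mul_sum_sq (s := s.erase i) (f := x)
  rw [hrest, hrest_sq, cast_card_erase_of_mem hi] at hcauchy
  linarith

lemma sum_pow_three_le_of_forall_le (hsum : ∑ i ∈ s, x i = 0) {M : R} (hM : ∀ i ∈ s, x i ≤ M)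
    (d : R) :
    ∑ i ∈ s, x i ^ 3 ≤ (M - 2 * d) * ∑ i ∈ s, x i ^ 2 + #s * (M * d ^ 2) := by
  have hnonneg : 0 ≤ ∑ i ∈ s, (M - x i) * (x i + d) ^ 2 :=
    sum_nonneg fun i hi ↦ mul_nonneg (sub_nonneg.2 (hM i hi)) (sq_nonneg _)
  have hexpand : ∑ i ∈ s, (M - x i) * (x i + d) ^ 2 =
      (M - 2 * d) * ∑ i ∈ s, x i ^ 2 + (2 * M * d - d ^ 2) * ∑ i ∈ s, x i + #s * (M * d ^ 2) -
        ∑ i ∈ s, x i ^ 3 := by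
    rw [mul_sum, mul_sum, ← nsmul_eq_mul, ← sum_const, ← sum_add_distrib, ← sum_add_distrib,
      ← sum_sub_distrib]
    exact sum_congr rfl fun i _ ↦ by ring
  rw [hexpand, hsum] at hnonneg
  linarith

lemma sum_pow_three_le_of_sum_sq_eq (hsum : ∑ i ∈ s, x i = 0) {d : R} (hd : 0 ≤ d)
    (hsq : ∑ i ∈ s, x i ^ 2 = #s * (#s - 1) * d ^ 2) :
    ∑ i ∈ s, x i ^ 3 ≤ (#s - 2) * d * ∑ i ∈ s, x i ^ 2 := by
  have hle : ∀ i ∈ s, x i ≤ (#s - 1) * d := by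
    intro i hi
    have hcard : (1 : R) ≤ #s := by exact_mod_cast card_pos.2 ⟨i, hi⟩
    have hcard_sq : (#s : R) * x i ^ 2 ≤ #s * ((#s - 1) * d) ^ 2 :=
      calc (#s : R) * x i ^ 2 ≤ (#s - 1) * ∑ j ∈ s, x j ^ 2 := card_mul_sq_le_of_sum_eq_zero hsum hi
        _ = #s * ((#s - 1) * d) ^ 2 := by rw [hsq]; ring
    exact le_of_sq_le_sq (le_of_mul_le_mul_left hcard_sq (zero_lt_one.trans_le hcard))
      (mul_nonneg (sub_nonneg.2 hcard) hd)
  calc ∑ i ∈ s, x i ^ 3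
      ≤ ((#s - 1) * d - 2 * d) * ∑ i ∈ s, x i ^ 2 + #s * ((#s - 1) * d * d ^ 2) :=
        sum_pow_three_le_of_forall_le hsum hle d
    _ = (#s - 2) * d * ∑ i ∈ s, x i ^ 2 := by linear_combination -d * hsq

lemma abs_sum_pow_three_le_of_sum_sq_eq (hsum : ∑ i ∈ s, x i = 0) {d : R} (hd : 0 ≤ d)
    (hsq : ∑ i ∈ s, x i ^ 2 = #s * (#s - 1) * d ^ 2) :
    |∑ i ∈ s, x i ^ 3| ≤ (#s - 2) * d * ∑ i ∈ s, x i ^ 2 := by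
  have hneg : ∑ i ∈ s, (-x i) ^ 3 ≤ (#s - 2) * d * ∑ i ∈ s, (-x i) ^ 2 :=
    sum_pow_three_le_of_sum_sq_eq (by rw [sum_neg_distrib, hsum, neg_zero]) hd
      (by simpa only [neg_sq] using hsq)
  simp only [neg_sq, Odd.neg_pow (by decide : Odd 3), sum_neg_distrib] at hneg
  exact abs_le'.2 ⟨sum_pow_three_le_of_sum_sq_eq hsum hd hsq, hneg⟩

end OrderedRing

theorem abs_sum_pow_three_le_of_sum_eq_zero {ι : Type*} {s : Finset ι} {x : ι → ℝ}
    (hs : 1 < #s) (hsum : ∑ i ∈ s, x i = 0) :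
    |∑ i ∈ s, x i ^ 3| ≤
      (#s - 2) / √(#s * (#s - 1)) * (∑ i ∈ s, x i ^ 2) ^ ((3 : ℝ) / 2) := by
  have hcard : (1 : ℝ) < #s := by exact_mod_cast hs
  have hN : 0 < (#s : ℝ) * (#s - 1) := mul_pos (by linarith) (by linarith)
  have hS : 0 ≤ ∑ i ∈ s, x i ^ 2 := sum_nonneg fun i _ ↦ sq_nonneg (x i)
  have hsq : ∑ i ∈ s, x i ^ 2 =
      #s * (#s - 1) * (√(∑ i ∈ s, x i ^ 2) / √(#s * (#s - 1))) ^ 2 := by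
    rw [div_pow, Real.sq_sqrt hS, Real.sq_sqrt hN.le, mul_div_cancel₀ _ hN.ne']
  have hpow : (∑ i ∈ s, x i ^ 2) ^ ((3 : ℝ) / 2) =
      √(∑ i ∈ s, x i ^ 2) * ∑ i ∈ s, x i ^ 2 := by
    rw [Real.rpow_div_two_eq_sqrt _ hS, Real.rpow_ofNat, pow_succ', Real.sq_sqrt hS]
  calc |∑ i ∈ s, x i ^ 3|
      ≤ (#s - 2) * (√(∑ i ∈ s, x i ^ 2) / √(#s * (#s - 1))) * ∑ i ∈ s, x i ^ 2 :=
        abs_sum_pow_three_le_of_sum_sq_eq hsum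
          (div_nonneg (Real.sqrt_nonneg _) (Real.sqrt_nonneg _)) hsq
    _ = (#s - 2) / √(#s * (#s - 1)) * (∑ i ∈ s, x i ^ 2) ^ ((3 : ℝ) / 2) := by
        rw [hpow]; ring

section Hermitian

variable {ι 𝕜 : Type*} [Fintype ι] [DecidableEq ι] [RCLike 𝕜] {A : Matrix ι ι 𝕜}

lemma trace_pow_eq_sum_eigenvalues_pow (hA : A.IsHermitian) (k : ℕ) :
    (A ^ k).trace = ((∑ i, hA.eigenvalues i ^ k : ℝ) : 𝕜) := by
  conv_lhs => rw [hA.spectral_theorem, ← map_pow, Unitary.conjStarAlgAut_apply,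
    Matrix.trace_mul_comm, ← mul_assoc, Unitary.coe_star_mul_self, one_mul, Matrix.diagonal_pow,
    Matrix.trace_diagonal]
  simp

theorem okumura_matrix_general [Nontrivial ι] (hA : A.IsHermitian) (htr : A.trace = 0) :
    ‖(A ^ 3).trace‖ ≤
      (Fintype.card ι - 2) / √(Fintype.card ι * (Fintype.card ι - 1)) *
        (RCLike.re (A ^ 2).trace) ^ ((3 : ℝ) / 2) := by
  have hsum : ∑ i, hA.eigenvalues i = 0 := by
    rw [hA.trace_eq_sum_eigenvalues] at htr
    exact_mod_cast htr
  rw [trace_pow_eq_sum_eigenvalues_pow hA, trace_pow_eq_sum_eigenvalues_pow hA,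
    RCLike.norm_ofReal, RCLike.ofReal_re]
  exact abs_sum_pow_three_le_of_sum_eq_zero Fintype.one_lt_card hsum

end Hermitian

/-- Okumura's lemma for a real symmetric traceless matrix `Φ`:
`|tr(Φ³)| ≤ ((n-2)/√(n(n-1))) (tr(Φ²))^{3/2}`. -/
theorem okumura_matrix (n : ℕ) (hn : 2 ≤ n) (Φ : Matrix (Fin n) (Fin n) ℝ)
    (hsymm : Φ.IsSymm) (htr : Φ.trace = 0) :
    |(Φ ^ 3).trace| ≤ (((n : ℝ) - 2) / Real.sqrt ((n : ℝ) * ((n : ℝ) - 1))) *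
      ((Φ ^ 2).trace) ^ ((3 : ℝ) / 2) := by
  have : Nontrivial (Fin n) := Fin.nontrivial_iff_two_le.2 hn
  have hΦ : Φ.IsHermitian := Φ.conjTranspose_eq_transpose_of_trivial.trans hsymm
  simpa using okumura_matrix_general hΦ htr
end

section
/- Let n ≥ 3 be an integer and r > 0, and set H := (nr² + 1)/(nr√(1+r²)). Then H > 1 if and only if r < 1/√(n(n−2)). Moreover, if H > 1 then √(n−1)/(r·√(n(1+r²))) = (√n/(2√(n−1)))·((n−2)H + √(n²H² − 4(n−1))) > α_H, where α_H := (√n/(2√(n−1)))·(√(n²H² − 4(n−1)) − (n−2)H). -/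
/-!
The cylinder has principal curvatures `κ = r / √(1 + r²)`, with multiplicity `n - 1`, and
`μ = √(1 + r²) / r = 1 / κ > 1 > κ`, so that `n H = (n - 1) κ + μ` and
`|Φ| = √((n - 1) / n) (μ - κ)`. Since `κ μ = 1`, the quantity `κ n (H - 1)` factors as
`(1 - κ) (1 - (n - 1) κ)`, and `n² H² - 4 (n - 1)` is the square of `μ - (n - 1) κ`.
Hence `H > 1` means `(n - 1) κ < 1`, and then `√(n² H² - 4 (n - 1)) = μ - (n - 1) κ`.
-/

section TwoPrincipalCurvatures

variable {n κ μ : ℝ}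

/-- The mean curvature of an `n`-dimensional hypersurface with two principal curvatures: `κ` of
multiplicity `n - 1` and `μ` of multiplicity one. The dimension is a real parameter because it
enters only as a weight. -/
noncomputable def twoCurvatureMean (n κ μ : ℝ) : ℝ := ((n - 1) * κ + μ) / n

theorem mul_twoCurvatureMean (hn : n ≠ 0) : n * twoCurvatureMean n κ μ = (n - 1) * κ + μ :=
  mul_div_cancel₀ _ hn

theorem twoCurvatureMean_pos (hn : 1 ≤ n) (hκ : 0 ≤ κ) (hμ : 0 < μ) :
    0 < twoCurvatureMean n κ μ :=
  div_pos (add_pos_of_nonneg_of_pos (mul_nonneg (sub_nonneg.2 hn) hκ) hμ) (by linarith)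

theorem twoCurvatureMean_discriminant (hn : n ≠ 0) :
    n ^ 2 * twoCurvatureMean n κ μ ^ 2 - 4 * (n - 1) * (κ * μ) = (μ - (n - 1) * κ) ^ 2 := by
  rw [← mul_pow, mul_twoCurvatureMean hn]
  ring

theorem one_lt_twoCurvatureMean_iff (hn : 0 < n) (hκ : 0 < κ) (hκ_lt : κ < 1)
    (hκμ : κ * μ = 1) : 1 < twoCurvatureMean n κ μ ↔ (n - 1) * κ < 1 := by
  have factorization : κ * ((n - 1) * κ + μ - n) = (1 - κ) * (1 - (n - 1) * κ) := by
    linear_combination hκμ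
  calc 1 < twoCurvatureMean n κ μ
      ↔ 0 < (n - 1) * κ + μ - n := by rw [twoCurvatureMean, one_lt_div hn, sub_pos]
    _ ↔ 0 < (1 - κ) * (1 - (n - 1) * κ) := by rw [← factorization, mul_pos_iff_of_pos_left hκ]
    _ ↔ (n - 1) * κ < 1 := by rw [mul_pos_iff_of_pos_left (sub_pos.2 hκ_lt), sub_pos]

theorem sub_two_mul_twoCurvatureMean_add_sqrt (hn : n ≠ 0) (h : (n - 1) * κ ≤ μ) :
    (n - 2) * twoCurvatureMean n κ μ +
        √(n ^ 2 * twoCurvatureMean n κ μ ^ 2 - 4 * (n - 1) * (κ * μ)) =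
      2 * (n - 1) / n * (μ - κ) := by
  rw [twoCurvatureMean_discriminant hn, Real.sqrt_sq (sub_nonneg.2 h), twoCurvatureMean]
  field_simp
  ring

end TwoPrincipalCurvatures

section Cylinder

variable {n r : ℝ}

/-- The principal curvature of `H^{n-1}(-√(1+r²)) × S¹(r) ⊂ H^{n+1}` along the hyperbolic factor,
for the unit normal that makes it positive. -/
noncomputable def hyperbolicFactorCurvature (r : ℝ) : ℝ := r / √(1 + r ^ 2)

/-- The principal curvature of `H^{n-1}(-√(1+r²)) × S¹(r) ⊂ H^{n+1}` along the circle, for the same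
unit normal as in `hyperbolicFactorCurvature`. -/
noncomputable def circleFactorCurvature (r : ℝ) : ℝ := √(1 + r ^ 2) / r

theorem sqrt_one_add_sq_pos (r : ℝ) : 0 < √(1 + r ^ 2) :=
  Real.sqrt_pos.2 (by positivity)

theorem sq_sqrt_one_add_sq (r : ℝ) : √(1 + r ^ 2) ^ 2 = 1 + r ^ 2 :=
  Real.sq_sqrt (by positivity)

theorem hyperbolicFactorCurvature_pos (hr : 0 < r) : 0 < hyperbolicFactorCurvature r :=
  div_pos hr (sqrt_one_add_sq_pos r)

theorem circleFactorCurvature_pos (hr : 0 < r) : 0 < circleFactorCurvature r :=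
  div_pos (sqrt_one_add_sq_pos r) hr

theorem hyperbolicFactorCurvature_lt_one (r : ℝ) : hyperbolicFactorCurvature r < 1 :=
  (div_lt_one (sqrt_one_add_sq_pos r)).2 (Real.lt_sqrt_of_sq_lt (lt_one_add _))

theorem hyperbolicFactorCurvature_mul_circleFactorCurvature (hr : r ≠ 0) :
    hyperbolicFactorCurvature r * circleFactorCurvature r = 1 := by
  rw [hyperbolicFactorCurvature, circleFactorCurvature,
    div_mul_div_cancel₀ (sqrt_one_add_sq_pos r).ne', div_self hr]

theorem circleFactorCurvature_sub_hyperbolicFactorCurvature (hr : r ≠ 0) :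
    circleFactorCurvature r - hyperbolicFactorCurvature r = 1 / (r * √(1 + r ^ 2)) := by
  have hs := (sqrt_one_add_sq_pos r).ne'
  rw [circleFactorCurvature, hyperbolicFactorCurvature]
  field_simp
  linear_combination sq_sqrt_one_add_sq r

theorem twoCurvatureMean_cylinder (hn : n ≠ 0) (hr : r ≠ 0) :
    twoCurvatureMean n (hyperbolicFactorCurvature r) (circleFactorCurvature r) =
      (n * r ^ 2 + 1) / (n * r * √(1 + r ^ 2)) := by
  have hs := (sqrt_one_add_sq_pos r).ne'
  rw [twoCurvatureMean, hyperbolicFactorCurvature, circleFactorCurvature]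
  field_simp
  linear_combination sq_sqrt_one_add_sq r

theorem sub_one_mul_hyperbolicFactorCurvature_le_circleFactorCurvature_iff (hr : 0 < r) :
    (n - 1) * hyperbolicFactorCurvature r ≤ circleFactorCurvature r ↔ (n - 2) * r ^ 2 ≤ 1 := by
  rw [hyperbolicFactorCurvature, circleFactorCurvature, ← mul_div_assoc,
    div_le_div_iff₀ (sqrt_one_add_sq_pos r) hr, ← sq, sq_sqrt_one_add_sq]
  constructor <;> intro h <;> linarith

theorem sub_one_mul_hyperbolicFactorCurvature_lt_one_iff (hn : 2 < n) (hr : 0 < r) :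
    (n - 1) * hyperbolicFactorCurvature r < 1 ↔ r < 1 / √(n * (n - 2)) := by
  have hpos : 0 < n * (n - 2) := mul_pos (by linarith) (by linarith)
  have hleft : 0 ≤ (n - 1) * r := mul_nonneg (by linarith) hr.le
  calc (n - 1) * hyperbolicFactorCurvature r < 1
      ↔ ((n - 1) * r) ^ 2 < 1 + r ^ 2 := by
        rw [hyperbolicFactorCurvature, ← mul_div_assoc, div_lt_one (sqrt_one_add_sq_pos r),
          Real.lt_sqrt hleft]
    _ ↔ r ^ 2 * (n * (n - 2)) < 1 := by constructor <;> intro h <;> linarith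
    _ ↔ (r * √(n * (n - 2))) ^ 2 < 1 := by rw [mul_pow, Real.sq_sqrt hpos.le]
    _ ↔ r < 1 / √(n * (n - 2)) := by
        rw [sq_lt_one_iff₀ (by positivity), lt_div_iff₀ (Real.sqrt_pos.2 hpos)]

theorem sub_two_mul_sq_le_one_of_one_lt_mean (hn : 0 < n) (hr : 0 < r)
    (h : 1 < (n * r ^ 2 + 1) / (n * r * √(1 + r ^ 2))) : (n - 2) * r ^ 2 ≤ 1 := by
  have hκ := hyperbolicFactorCurvature_pos hr
  have hκ_lt := hyperbolicFactorCurvature_lt_one r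
  have hκμ := hyperbolicFactorCurvature_mul_circleFactorCurvature hr.ne'
  rw [← twoCurvatureMean_cylinder hn.ne' hr.ne',
    one_lt_twoCurvatureMean_iff hn hκ hκ_lt hκμ] at h
  have one_lt_circle : 1 < circleFactorCurvature r := by
    rw [eq_one_div_of_mul_eq_one_right hκμ]
    exact one_lt_one_div hκ hκ_lt
  exact (sub_one_mul_hyperbolicFactorCurvature_le_circleFactorCurvature_iff hr).1
    (h.trans one_lt_circle).le

/-- The left side is the norm of the traceless second fundamental form of the cylinder. -/
theorem cylinder_traceless_norm_eq (hn : 1 < n) (hr : r ≠ 0) :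
    √(n - 1) / (r * √(n * (1 + r ^ 2))) =
      √n / (2 * √(n - 1)) *
        (2 * (n - 1) / n * (circleFactorCurvature r - hyperbolicFactorCurvature r)) := by
  have hn0 : 0 < n := by linarith
  have hsqrt_ne := (Real.sqrt_pos.2 (sub_pos.2 hn)).ne'
  rw [circleFactorCurvature_sub_hyperbolicFactorCurvature hr, Real.sqrt_mul hn0.le]
  field_simp
  rw [Real.sq_sqrt hn0.le, Real.sq_sqrt (sub_nonneg.2 hn.le)]
  ring

end Cylinder

theorem hyperbolic_cylinder_k1_general {n r H : ℝ} (hn : 2 < n) (hr : 0 < r)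
    (hH : H = (n * r ^ 2 + 1) / (n * r * √(1 + r ^ 2))) :
    (1 < H ↔ r < 1 / √(n * (n - 2))) ∧
    ((n - 2) * r ^ 2 ≤ 1 →
      √(n - 1) / (r * √(n * (1 + r ^ 2))) =
        √n / (2 * √(n - 1)) * ((n - 2) * H + √(n ^ 2 * H ^ 2 - 4 * (n - 1)))) ∧
    √n / (2 * √(n - 1)) * (√(n ^ 2 * H ^ 2 - 4 * (n - 1)) - (n - 2) * H) <
      √n / (2 * √(n - 1)) * ((n - 2) * H + √(n ^ 2 * H ^ 2 - 4 * (n - 1))) := by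
  have hn0 : 0 < n := by linarith
  have hκ := hyperbolicFactorCurvature_pos hr
  have hκμ := hyperbolicFactorCurvature_mul_circleFactorCurvature hr.ne'
  rw [← twoCurvatureMean_cylinder hn0.ne' hr.ne'] at hH
  refine ⟨?_, fun h ↦ ?_, ?_⟩
  · rw [hH, one_lt_twoCurvatureMean_iff hn0 hκ (hyperbolicFactorCurvature_lt_one r) hκμ,
      sub_one_mul_hyperbolicFactorCurvature_lt_one_iff hn hr]
  · have hroot := sub_two_mul_twoCurvatureMean_add_sqrt hn0.ne'
      ((sub_one_mul_hyperbolicFactorCurvature_le_circleFactorCurvature_iff hr).2 h)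
    rw [hκμ, mul_one, ← hH] at hroot
    rw [cylinder_traceless_norm_eq (by linarith) hr.ne', hroot]
  · have hH_pos : 0 < H := hH ▸ twoCurvatureMean_pos (by linarith) hκ.le
      (circleFactorCurvature_pos hr)
    have hgap : 0 < (n - 2) * H := mul_pos (sub_pos.2 hn) hH_pos
    have hsqrt_pos : 0 < √(n - 1) := Real.sqrt_pos.2 (by linarith)
    exact mul_lt_mul_of_pos_left (by linarith) (by positivity)

/-- For the hyperbolic cylinder `H^{n-1}(-√(1+r²)) × S¹(r) ⊂ H^{n+1}` with mean
curvature `H = (nr² + 1)/(nr√(1+r²))`: `H > 1` iff `r < 1/√(n(n-2))`; and if `H > 1`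
then `|Φ| = √(n-1)/(r√(n(1+r²))) = (√n/(2√(n-1)))((n-2)H + √(n²H² - 4(n-1))) > α_H`,
where `α_H = (√n/(2√(n-1)))(√(n²H² - 4(n-1)) - (n-2)H)`. -/
theorem hyperbolic_cylinder_k1 (n : ℕ) (hn : 3 ≤ n) (r : ℝ) (hr : 0 < r) (H αH : ℝ)
    (hH : H = ((n : ℝ) * r ^ 2 + 1) / ((n : ℝ) * r * Real.sqrt (1 + r ^ 2)))
    (hα : αH = (Real.sqrt (n : ℝ) / (2 * Real.sqrt ((n : ℝ) - 1))) *
      (Real.sqrt ((n : ℝ) ^ 2 * H ^ 2 - 4 * ((n : ℝ) - 1)) - ((n : ℝ) - 2) * H)) :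
    (H > 1 ↔ r < 1 / Real.sqrt ((n : ℝ) * ((n : ℝ) - 2))) ∧
    (H > 1 →
      Real.sqrt ((n : ℝ) - 1) / (r * Real.sqrt ((n : ℝ) * (1 + r ^ 2))) =
        (Real.sqrt (n : ℝ) / (2 * Real.sqrt ((n : ℝ) - 1))) *
          (((n : ℝ) - 2) * H + Real.sqrt ((n : ℝ) ^ 2 * H ^ 2 - 4 * ((n : ℝ) - 1))) ∧
      (Real.sqrt (n : ℝ) / (2 * Real.sqrt ((n : ℝ) - 1))) *
          (((n : ℝ) - 2) * H + Real.sqrt ((n : ℝ) ^ 2 * H ^ 2 - 4 * ((n : ℝ) - 1))) >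
        αH) := by
  obtain ⟨hiff, hnorm, hlt⟩ := hyperbolic_cylinder_k1_general (by norm_cast) hr hH
  exact ⟨hiff, fun h ↦ ⟨hnorm (sub_two_mul_sq_le_one_of_one_lt_mean (by positivity) hr (hH ▸ h)),
    hα ▸ hlt⟩⟩
end

section
/- Let n ≥ 3 be an integer and r > 0, and set H := (nr² + (n−1))/(nr√(1+r²)). Then H > 1, and √(n−1)/(r·√(n(1+r²))) = (√n/(2√(n−1)))·(√(n²H² − 4(n−1)) − (n−2)H). -/
/-!
The cylinder has principal curvatures `κ = r / √(1 + r²)`, once, and `μ = √(1 + r²) / r`, with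
multiplicity `n - 1`, and `κ μ = 1 = -c`. Since `n H = κ + (n - 1) μ`, the discriminant in `α_H` is
`(κ + (n - 1) μ)² - 4 (n - 1) κ μ = ((n - 1) μ - κ)²`, so `α_H` is linear in `κ` and `μ`, and it
equals `|Φ| = √((n - 1) / n) (μ - κ)`. The bound `H > 1` comes from `κ < 1 < μ`:
`n (H - 1) = (μ - 1) (1 - κ) + (n - 2) (μ - 1)`.
-/

section TwoPrincipalCurvatures

/-- The mean curvature of an `m`-dimensional hypersurface with principal curvatures `κ`, once, and
`μ`, with multiplicity `m - 1`. The dimension `m` is a real parameter, as only algebra in `m`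
is involved. -/
noncomputable def meanCurvature (m κ μ : ℝ) : ℝ :=
  (κ + (m - 1) * μ) / m

/-- The norm `|Φ|` of the traceless second fundamental form of an `m`-dimensional hypersurface with
principal curvatures `κ`, once, and `μ`, with multiplicity `m - 1`. -/
noncomputable def tracelessNorm (m κ μ : ℝ) : ℝ :=
  √((κ - meanCurvature m κ μ) ^ 2 + (m - 1) * (μ - meanCurvature m κ μ) ^ 2)

/-- The constant `α_H`, with which `|Φ|` is compared for `m`-dimensional hypersurfaces of mean
curvature `H` in a space form of curvature `c`. -/
noncomputable def criticalTracelessNorm (m c H : ℝ) : ℝ :=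
  √m / (2 * √(m - 1)) * (√(m ^ 2 * H ^ 2 + 4 * (m - 1) * c) - (m - 2) * |H|)

variable {m c κ μ : ℝ}

lemma tracelessNorm_eq (hm : m ≠ 0) :
    tracelessNorm m κ μ = √((m - 1) / m) * |μ - κ| := by
  have sum_sq : (κ - meanCurvature m κ μ) ^ 2 + (m - 1) * (μ - meanCurvature m κ μ) ^ 2 =
      (m - 1) / m * (μ - κ) ^ 2 := by
    unfold meanCurvature
    field_simp
    ring
  rw [tracelessNorm, sum_sq, Real.sqrt_mul' _ (sq_nonneg _), Real.sqrt_sq_eq_abs]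

lemma sq_mul_meanCurvature_sq_add (hm : m ≠ 0) (hc : κ * μ = -c) :
    m ^ 2 * meanCurvature m κ μ ^ 2 + 4 * (m - 1) * c = ((m - 1) * μ - κ) ^ 2 := by
  rw [← mul_pow, meanCurvature, mul_div_cancel₀ _ hm]
  linear_combination 4 * (m - 1) * hc

lemma criticalTracelessNorm_meanCurvature (hm : 1 < m) (hc : κ * μ = -c)
    (hκ : |κ| ≤ (m - 1) * μ) :
    criticalTracelessNorm m c (meanCurvature m κ μ) = √((m - 1) / m) * (μ - κ) := by
  have m_pos : 0 < m := by linarith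
  have m_sub_one_pos : 0 < m - 1 := by linarith
  obtain ⟨neg_le, le⟩ := abs_le.mp hκ
  have mean_nonneg : 0 ≤ meanCurvature m κ μ := div_nonneg (by linarith) m_pos.le
  have difference : (m - 1) * μ - κ - (m - 2) * meanCurvature m κ μ =
      2 * ((m - 1) / m) * (μ - κ) := by
    unfold meanCurvature
    field_simp
    ring
  have coefficient : √m / (2 * √(m - 1)) * (2 * ((m - 1) / m)) = √((m - 1) / m) := by
    rw [Real.sqrt_div m_sub_one_pos.le]
    field_simp
    rw [Real.sq_sqrt m_pos.le, Real.sq_sqrt m_sub_one_pos.le, mul_comm]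
  rw [criticalTracelessNorm, sq_mul_meanCurvature_sq_add m_pos.ne' hc,
    Real.sqrt_sq (sub_nonneg.mpr le), abs_of_nonneg mean_nonneg, difference, ← mul_assoc,
    coefficient]

theorem tracelessNorm_eq_criticalTracelessNorm (hm : 1 < m) (hc : κ * μ = -c) (hκμ : κ ≤ μ)
    (hκ : |κ| ≤ (m - 1) * μ) :
    tracelessNorm m κ μ = criticalTracelessNorm m c (meanCurvature m κ μ) := by
  rw [tracelessNorm_eq (by linarith), abs_of_nonneg (sub_nonneg.mpr hκμ),
    criticalTracelessNorm_meanCurvature hm hc hκ]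

lemma one_lt_meanCurvature (hm : 2 ≤ m) (hκμ : κ * μ = 1) (hκ : κ < 1) (hμ : 1 < μ) :
    1 < meanCurvature m κ μ := by
  have product_pos : 0 < (μ - 1) * (1 - κ) := mul_pos (sub_pos.mpr hμ) (sub_pos.mpr hκ)
  have remainder_nonneg : 0 ≤ (m - 2) * (μ - 1) :=
    mul_nonneg (sub_nonneg.mpr hm) (sub_pos.mpr hμ).le
  rw [meanCurvature, one_lt_div (by linarith)]
  linarith

end TwoPrincipalCurvatures

section HyperbolicCylinder

lemma lt_sqrt_one_add_sq (r : ℝ) : r < √(1 + r ^ 2) :=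
  Real.lt_sqrt_of_sq_lt (lt_one_add _)

variable {m r : ℝ}

lemma meanCurvature_hyperbolicCylinder (hr : r ≠ 0) :
    meanCurvature m (r / √(1 + r ^ 2)) (√(1 + r ^ 2) / r) =
      (m * r ^ 2 + (m - 1)) / (m * r * √(1 + r ^ 2)) := by
  have trace_eq : r / √(1 + r ^ 2) + (m - 1) * (√(1 + r ^ 2) / r) =
      (m * r ^ 2 + (m - 1)) / (r * √(1 + r ^ 2)) := by
    field_simp
    rw [Real.sq_sqrt (by positivity)]
    ring
  rw [meanCurvature, trace_eq, div_div, mul_comm _ m, mul_assoc]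

lemma tracelessNorm_hyperbolicCylinder (hm : 1 ≤ m) (hr : 0 < r) :
    tracelessNorm m (r / √(1 + r ^ 2)) (√(1 + r ^ 2) / r) =
      √(m - 1) / (r * √(m * (1 + r ^ 2))) := by
  have gap : √(1 + r ^ 2) / r - r / √(1 + r ^ 2) = 1 / (r * √(1 + r ^ 2)) := by
    field_simp
    rw [Real.sq_sqrt (by positivity)]
    ring
  rw [tracelessNorm_eq (by linarith), gap, abs_of_pos (by positivity),
    Real.sqrt_div (by linarith), Real.sqrt_mul (by linarith), div_mul_div_comm, mul_one,
    mul_left_comm]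

theorem hyperbolic_cylinder_k_n_minus_one_general (m : ℝ) (hm : 2 ≤ m) (r : ℝ) (hr : 0 < r)
    (H : ℝ) (hH : H = (m * r ^ 2 + (m - 1)) / (m * r * √(1 + r ^ 2))) :
    H > 1 ∧
    √(m - 1) / (r * √(m * (1 + r ^ 2))) =
      √m / (2 * √(m - 1)) * (√(m ^ 2 * H ^ 2 - 4 * (m - 1)) - (m - 2) * H) := by
  have sqrt_pos : 0 < √(1 + r ^ 2) := by positivity
  have product_eq_one : r / √(1 + r ^ 2) * (√(1 + r ^ 2) / r) = 1 := by field_simp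
  have κ_lt_one : r / √(1 + r ^ 2) < 1 := (div_lt_one sqrt_pos).mpr (lt_sqrt_one_add_sq r)
  have one_lt_μ : 1 < √(1 + r ^ 2) / r := (one_lt_div hr).mpr (lt_sqrt_one_add_sq r)
  have κ_le : |r / √(1 + r ^ 2)| ≤ (m - 1) * (√(1 + r ^ 2) / r) := by
    rw [abs_of_pos (by positivity)]
    exact κ_lt_one.le.trans (one_le_mul_of_one_le_of_one_le (by linarith) one_lt_μ.le)
  rw [← meanCurvature_hyperbolicCylinder hr.ne'] at hH
  have one_lt_H : 1 < H := hH ▸ one_lt_meanCurvature hm product_eq_one κ_lt_one one_lt_μ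
  have norm_eq := tracelessNorm_eq_criticalTracelessNorm (c := -1) (by linarith : 1 < m)
    (by rw [product_eq_one, neg_neg]) (κ_lt_one.trans one_lt_μ).le κ_le
  rw [tracelessNorm_hyperbolicCylinder (by linarith) hr, ← hH, criticalTracelessNorm,
    abs_of_pos (by linarith), mul_neg_one, ← sub_eq_add_neg] at norm_eq
  exact ⟨one_lt_H, norm_eq⟩

end HyperbolicCylinder

/-- For the hyperbolic cylinder `H¹(-√(1+r²)) × S^{n-1}(r) ⊂ H^{n+1}` with mean
curvature `H = (nr² + (n-1))/(nr√(1+r²))`: `H > 1`, and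
`|Φ| = √(n-1)/(r√(n(1+r²))) = (√n/(2√(n-1)))(√(n²H² - 4(n-1)) - (n-2)H)`. -/
theorem hyperbolic_cylinder_k_n_minus_one (n : ℕ) (hn : 3 ≤ n) (r : ℝ) (hr : 0 < r)
    (H : ℝ)
    (hH : H = ((n : ℝ) * r ^ 2 + ((n : ℝ) - 1)) / ((n : ℝ) * r * Real.sqrt (1 + r ^ 2))) :
    H > 1 ∧
    Real.sqrt ((n : ℝ) - 1) / (r * Real.sqrt ((n : ℝ) * (1 + r ^ 2))) =
      (Real.sqrt (n : ℝ) / (2 * Real.sqrt ((n : ℝ) - 1))) *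
        (Real.sqrt ((n : ℝ) ^ 2 * H ^ 2 - 4 * ((n : ℝ) - 1)) - ((n : ℝ) - 2) * H) := by
  have two_le_n : (2 : ℝ) ≤ n := by exact_mod_cast (Nat.le_succ 2).trans hn
  exact hyperbolic_cylinder_k_n_minus_one_general n two_le_n r hr H hH
end
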